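/- (Corollary 7, multi-task learning.) Suppose Y = XB* + W ∈ ℝ^{n×m} where X ∈ ℝ^{n×p} satisfies det(XᵀX) > 0, the columns of B* satisfy B*_{*j} = Q*_{*z*(j)} for some Q* ∈ ℝ^{p×k*} and z* ∈ [k*]^m, and W is sub-Gaussian with parameter ρ. Then for any constants λ, ρ > 0 and any sufficiently small constant δ ∈ (0,1), there exists a constant D_{λ,δ,ρ} > 0 depending only on λ, δ, ρ such that for every D > D_{λ,δ,ρ} there exist constants M, C', C'' > 0 depending only on λ, δ, ρ, D with: E Π( pk + m log k > (1+δ)(pk* + m log k*) | Y ) ≤ exp(−C'(pk* + m log k*)) and E Π( ‖XB − XB*‖_F² > M(pk* + m log k*) | Y ) ≤ exp(−C''(pk* + m log k*)). -/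

import Mathlib

open MeasureTheory Real Matrix
open scoped ENNReal Classical

/-- Euclidean norm of a finitely-indexed real vector. -/
noncomputable def enr {ι : Type*} [Fintype ι] (v : ι → ℝ) : ℝ :=
  Real.sqrt (∑ i, v i ^ 2)

/-- Euclidean inner product. -/
noncomputable def ipr {ι : Type*} [Fintype ι] (u v : ι → ℝ) : ℝ :=
  ∑ i, u i * v i

/-- Sub-Gaussian condition (2.2): `P(|⟨W,K⟩| > t) ≤ exp(-ρ t²/2)` for every unit vector `K`. -/
def subG {ι Ω : Type*} [Fintype ι] [MeasurableSpace Ω] (P : Measure Ω) (ρ : ℝ)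
    (W : Ω → ι → ℝ) : Prop :=
  ∀ K : ι → ℝ, enr K = 1 → ∀ t : ℝ, 0 < t →
    P {ω | t < |ipr (W ω) K|} ≤ ENNReal.ofReal (Real.exp (-ρ * t ^ 2 / 2))

/-- Determinant of the Gram matrix `AᵀA`. -/
noncomputable def gramDet {N κ : Type*} [Fintype N] [Fintype κ] [DecidableEq κ]
    (A : Matrix N κ ℝ) : ℝ := (Aᵀ * A).det

/-- Generic posterior probability for a structured linear model.
`ι` indexes the models (structures), `κ i` the coordinates of the parameter of model `i`,
`A i` is the matrix of the linear operator `𝒳` of model `i`, `w i` the model-selection prior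
weight (with the Gamma-correction already cancelled against the Laplace normalizing constant),
`emb i` maps a parameter to the object the posterior statement is about, `Y` is the data,
`Sel` restricts the model index and `U` the embedded parameter. -/
noncomputable def gpostP {Θ N ι : Type*} [Fintype N] [Fintype ι]
    {κ : ι → Type*} [∀ i, Fintype (κ i)] [∀ i, DecidableEq (κ i)]
    (w : ι → ℝ) (A : (i : ι) → Matrix N (κ i) ℝ)
    (emb : (i : ι) → (κ i → ℝ) → Θ) (lam : ℝ) (Y : N → ℝ)
    (Sel : Set ι) (U : Set Θ) : ℝ :=
  (∑ i : ι, (if i ∈ Sel then w i else 0) * Real.sqrt (gramDet (A i)) *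
      (lam / Real.sqrt π) ^ Fintype.card (κ i) *
      ∫ Q in {Q : κ i → ℝ | emb i Q ∈ U},
        Real.exp (-(1/2) * (enr fun t => Y t - (A i).mulVec Q t) ^ 2
          - lam * enr ((A i).mulVec Q))) /
  (∑ i : ι, w i * Real.sqrt (gramDet (A i)) *
      (lam / Real.sqrt π) ^ Fintype.card (κ i) *
      ∫ Q : κ i → ℝ,
        Real.exp (-(1/2) * (enr fun t => Y t - (A i).mulVec Q t) ^ 2
          - lam * enr ((A i).mulVec Q)))

/-- The design matrix of the multi-task learning model: it maps `Q ∈ ℝ^{p×k}` to the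
fitted matrix `XB` with columns `B_{*j} = Q_{*z(j)}`. -/
noncomputable def mtX {n p : ℕ} (m k : ℕ) (X : Matrix (Fin n) (Fin p) ℝ)
    (z : Fin m → Fin k) : Matrix (Fin n × Fin m) (Fin p × Fin k) ℝ :=
  fun a b => if z a.2 = b.2 then X a.1 b.1 else 0

/-- The posterior distribution of the multi-task learning prior: `k` is sampled with
weight proportional to `(Γ(pk)/Γ(pk/2)) exp(-D(pk + m log k))` on `[p]`, `z` uniformly
from `[k]^m`, `Q` from the elliptical Laplace density `∝ exp(-λ√(Σ_j ‖XQ_{*z(j)}‖²))`, and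
the Gaussian pseudo-likelihood `∝ exp(-½‖Y - XB‖_F²)` is used; `K` restricts the number
of clusters `k` and `U` restricts the fitted matrix `XB`.  (The Gamma correction factor
has been cancelled.) -/
noncomputable def mtPost (n p m : ℕ) (X : Matrix (Fin n) (Fin p) ℝ) (D lam : ℝ)
    (Y : Fin n × Fin m → ℝ) (K : Set ℕ) (U : Set (Fin n × Fin m → ℝ)) : ℝ :=
  gpostP
    (fun i : Σ k : Fin p, (Fin m → Fin ((k : ℕ) + 1)) =>
      Real.exp (-D * ((p : ℝ) * (((i.1 : ℕ) + 1 : ℕ) : ℝ)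
          + (m : ℝ) * Real.log (((i.1 : ℕ) + 1 : ℕ)))) *
        ((((i.1 : ℕ) + 1 : ℕ) : ℝ) ^ m)⁻¹)
    (fun i => mtX m ((i.1 : ℕ) + 1) X i.2)
    (fun i Q => (mtX m ((i.1 : ℕ) + 1) X i.2).mulVec Q)
    lam Y {i | ((i.1 : ℕ) + 1) ∈ K} U

/-!
Write the posterior as a ratio of prior-weighted evidences of the models. In the denominator keep
only a model containing the signal: centring its parameter at the truth and averaging over `±q`
removes the noise, so its evidence is at least the density at the truth times
`exp (-O(complexity))`, whatever the noise is. In the numerator, the noise enters a model only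
through its projection to the subspace spanned by the fitted values and the signal; a net of that
subspace and a union bound over all models show that, except on an event of exponentially small
probability, this projection has squared norm `O(complexity)`. On that event each evidence is at
most the density at the truth times `exp (O(complexity) - loss / 8)`, and either the prior penalty
`exp (-D * complexity)` or the loss dominates the remaining terms.
-/

section EuclideanNorm

variable {ι : Type*} [Fintype ι]

lemma enr_eq_norm (v : ι → ℝ) : enr v = ‖WithLp.toLp 2 v‖ := by
  simp [enr, EuclideanSpace.norm_eq]

lemma ipr_eq_inner (u v : ι → ℝ) :
    ipr u v = inner ℝ (WithLp.toLp 2 u) (WithLp.toLp 2 v) := by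
  simp [ipr, PiLp.inner_apply, mul_comm]

lemma enr_sq (v : ι → ℝ) : enr v ^ 2 = ∑ i, v i ^ 2 :=
  Real.sq_sqrt (Finset.sum_nonneg fun i _ => sq_nonneg (v i))

lemma enr_nonneg (v : ι → ℝ) : 0 ≤ enr v := Real.sqrt_nonneg _

lemma enr_neg (v : ι → ℝ) : enr (-v) = enr v := by
  simp [enr]

lemma enr_add_le (u v : ι → ℝ) : enr (u + v) ≤ enr u + enr v := by
  simpa only [enr_eq_norm, WithLp.toLp_add] using norm_add_le (WithLp.toLp 2 u) (WithLp.toLp 2 v)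

lemma enr_le_enr_add_enr_sub (u v : ι → ℝ) : enr v ≤ enr u + enr (u - v) := by
  simpa only [enr_eq_norm, WithLp.toLp_sub] using
    norm_le_norm_add_norm_sub (WithLp.toLp 2 u) (WithLp.toLp 2 v)

lemma enr_sub_sq (u v : ι → ℝ) :
    enr (u - v) ^ 2 = enr u ^ 2 - 2 * ipr u v + enr v ^ 2 := by
  simpa only [enr_eq_norm, ipr_eq_inner, WithLp.toLp_sub] using
    norm_sub_sq_real (WithLp.toLp 2 u) (WithLp.toLp 2 v)

lemma ipr_neg_right (u v : ι → ℝ) : ipr u (-v) = -ipr u v := by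
  simp [ipr]

@[fun_prop]
lemma continuous_enr : Continuous (enr : (ι → ℝ) → ℝ) := by
  unfold enr; fun_prop

end EuclideanNorm

section GaussianIntegrals

variable {N κ : Type*} [Fintype N] [Fintype κ]

lemma integrable_exp_neg_mul_enr_sq {b : ℝ} (hb : 0 < b) :
    Integrable fun Q : κ → ℝ => exp (-b * enr Q ^ 2) := by
  simp only [enr_sq, Finset.mul_sum, Real.exp_sum]
  exact Integrable.fintype_prod (f := fun _ x => exp (-b * x ^ 2))
    fun _ => integrable_exp_neg_mul_sq hb

lemma integral_exp_neg_mul_enr_sq (b : ℝ) :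
    ∫ Q : κ → ℝ, exp (-b * enr Q ^ 2) = √(π / b) ^ Fintype.card κ := by
  simp only [enr_sq, Finset.mul_sum, Real.exp_sum]
  rw [integral_fintype_prod_volume_eq_pow fun x : ℝ => exp (-b * x ^ 2), integral_gaussian]

lemma enr_mulVec_sq (A : Matrix N κ ℝ) (Q : κ → ℝ) :
    enr (A *ᵥ Q) ^ 2 = Q ⬝ᵥ ((Aᵀ * A) *ᵥ Q) := by
  rw [enr_sq, ← Matrix.mulVec_mulVec, Matrix.dotProduct_mulVec, Matrix.vecMul_transpose]
  simp [dotProduct, sq]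

variable [DecidableEq κ]

lemma integrable_comp_mulVec {S : Matrix κ κ ℝ} (hS : S.det ≠ 0) {f : (κ → ℝ) → ℝ}
    (hf : Integrable f) : Integrable fun Q => f (S *ᵥ Q) := by
  have hf_map : Integrable f (volume.map (Matrix.toLin' S)) := by
    rw [Real.map_matrix_volume_pi_eq_smul_volume_pi hS]
    exact hf.smul_measure ENNReal.ofReal_ne_top
  exact hf_map.comp_measurable (Matrix.toLin' S).continuous_of_finiteDimensional.measurable

lemma abs_det_mul_integral_comp_mulVec {S : Matrix κ κ ℝ} (hS : S.det ≠ 0) {f : (κ → ℝ) → ℝ}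
    (hf : Integrable f) : |S.det| * ∫ Q, f (S *ᵥ Q) = ∫ Q, f Q := by
  have h_map := Real.map_matrix_volume_pi_eq_smul_volume_pi hS
  have h_integral : ∫ Q, f Q ∂(volume.map (Matrix.toLin' S)) = ∫ Q, f (S *ᵥ Q) :=
    integral_map (Matrix.toLin' S).continuous_of_finiteDimensional.aemeasurable
      (by rw [h_map]; exact hf.aestronglyMeasurable.smul_measure _)
  rw [← h_integral, h_map, integral_smul_measure, ENNReal.toReal_ofReal (abs_nonneg _), abs_inv,
    smul_eq_mul, mul_inv_cancel_left₀ (abs_ne_zero.mpr hS)]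

lemma gramDet_nonneg (A : Matrix N κ ℝ) : 0 ≤ gramDet A := by
  simpa [gramDet] using (Matrix.posSemidef_conjTranspose_mul_self A).det_nonneg

lemma gramDet_pos_of_injective {A : Matrix N κ ℝ} (hA : Function.Injective A.mulVec) :
    0 < gramDet A := by
  simpa [gramDet] using (Matrix.PosDef.conjTranspose_mul_self A hA).det_pos

lemma gramDet_eq_zero_of_isEmpty [IsEmpty N] [Nonempty κ] (A : Matrix N κ ℝ) :
    gramDet A = 0 := by
  have h_gram : Aᵀ * A = 0 := by ext; simp [Matrix.mul_apply]
  rw [gramDet, h_gram, Matrix.det_zero]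

open scoped MatrixOrder in
lemma exists_abs_det_eq_sqrt_gramDet (A : Matrix N κ ℝ) :
    ∃ S : Matrix κ κ ℝ, |S.det| = √(gramDet A) ∧ ∀ Q, enr (A *ᵥ Q) ^ 2 = enr (S *ᵥ Q) ^ 2 := by
  obtain ⟨S, hS⟩ := CStarAlgebra.nonneg_iff_eq_star_mul_self.mp
    (Matrix.posSemidef_conjTranspose_mul_self A).nonneg
  have h_gram : Aᵀ * A = Sᵀ * S := by
    simpa [Matrix.star_eq_conjTranspose] using hS
  refine ⟨S, ?_, fun Q => by rw [enr_mulVec_sq, enr_mulVec_sq, h_gram]⟩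
  rw [gramDet, h_gram, Matrix.det_mul, Matrix.det_transpose, ← sq, Real.sqrt_sq_eq_abs]

lemma integrable_exp_neg_mul_enr_mulVec_sq {A : Matrix N κ ℝ} (hA : 0 < gramDet A) {b : ℝ}
    (hb : 0 < b) : Integrable fun Q => exp (-b * enr (A *ᵥ Q) ^ 2) := by
  obtain ⟨S, hdet, hS⟩ := exists_abs_det_eq_sqrt_gramDet A
  have hS0 : S.det ≠ 0 := abs_pos.mp (hdet ▸ Real.sqrt_pos.mpr hA)
  simpa only [hS] using integrable_comp_mulVec hS0 (integrable_exp_neg_mul_enr_sq hb)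

lemma sqrt_gramDet_mul_integral_exp_neg_mul_enr_mulVec_sq {A : Matrix N κ ℝ}
    (hA : 0 < gramDet A) {b : ℝ} (hb : 0 < b) :
    √(gramDet A) * ∫ Q, exp (-b * enr (A *ᵥ Q) ^ 2) = √(π / b) ^ Fintype.card κ := by
  obtain ⟨S, hdet, hS⟩ := exists_abs_det_eq_sqrt_gramDet A
  have hS0 : S.det ≠ 0 := abs_pos.mp (hdet ▸ Real.sqrt_pos.mpr hA)
  simp only [hS, ← hdet]
  rw [abs_det_mul_integral_comp_mulVec hS0 (integrable_exp_neg_mul_enr_sq hb),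
    integral_exp_neg_mul_enr_sq]

/-- The witness is the least-squares solution `(AᵀA)⁻¹Aᵀu`, and the bound is Pythagoras. -/
lemma exists_enr_mulVec_sub_sq_le {A : Matrix N κ ℝ} (hA : gramDet A ≠ 0) (u : N → ℝ) :
    ∃ Q₀ : κ → ℝ, ∀ Q, enr (A *ᵥ (Q - Q₀)) ^ 2 ≤ enr (A *ᵥ Q - u) ^ 2 := by
  refine ⟨(Aᵀ * A)⁻¹ *ᵥ Aᵀ *ᵥ u, fun Q => ?_⟩
  set Q₀ := (Aᵀ * A)⁻¹ *ᵥ Aᵀ *ᵥ u with hQ₀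
  have h_normal : Aᵀ *ᵥ (u - A *ᵥ Q₀) = 0 := by
    rw [Matrix.mulVec_sub, hQ₀, Matrix.mulVec_mulVec, Matrix.mulVec_mulVec,
      Matrix.mul_nonsing_inv _ hA.isUnit, Matrix.one_mulVec, sub_self]
  have h_orth : ipr (A *ᵥ (Q - Q₀)) (u - A *ᵥ Q₀) = 0 := by
    change (A *ᵥ (Q - Q₀)) ⬝ᵥ (u - A *ᵥ Q₀) = 0
    rw [dotProduct_comm, Matrix.dotProduct_mulVec, ← Matrix.mulVec_transpose, h_normal,
      zero_dotProduct]
  have h_split : A *ᵥ Q - u = A *ᵥ (Q - Q₀) - (u - A *ᵥ Q₀) := by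
    rw [Matrix.mulVec_sub]; abel
  rw [h_split, enr_sub_sq, h_orth]
  linarith [sq_nonneg (enr (u - A *ᵥ Q₀))]

end GaussianIntegrals

section Evidence

variable {N κ : Type*} [Fintype N] [Fintype κ]

/-- The unnormalised posterior density of the parameter `Q` within the model with design matrix
`A`: Gaussian pseudo-likelihood of the data `Y` times elliptical Laplace prior. -/
noncomputable def unnormPosterior (A : Matrix N κ ℝ) (lam : ℝ) (Y : N → ℝ) (Q : κ → ℝ) : ℝ :=
  exp (-(1 / 2) * enr (Y - A *ᵥ Q) ^ 2 - lam * enr (A *ᵥ Q))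

/-- The unnormalised posterior density at noise `W` of a parameter fitting the true signal `u`
exactly. -/
noncomputable def densityAtTruth (lam : ℝ) (u W : N → ℝ) : ℝ :=
  exp (-(1 / 2) * enr W ^ 2 - lam * enr u)

lemma unnormPosterior_pos (A : Matrix N κ ℝ) (lam : ℝ) (Y : N → ℝ) (Q : κ → ℝ) :
    0 < unnormPosterior A lam Y Q := exp_pos _

lemma densityAtTruth_pos (lam : ℝ) (u W : N → ℝ) : 0 < densityAtTruth lam u W := exp_pos _

lemma continuous_unnormPosterior (A : Matrix N κ ℝ) (lam : ℝ) (Y : N → ℝ) :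
    Continuous (unnormPosterior A lam Y) := by
  unfold unnormPosterior; fun_prop

lemma le_unnormPosterior_add (A : Matrix N κ ℝ) {lam : ℝ} (hlam : 0 ≤ lam) (Q₀ q : κ → ℝ)
    (W : N → ℝ) :
    densityAtTruth lam (A *ᵥ Q₀) W * exp (-lam ^ 2 / 2) *
        (exp (-1 * enr (A *ᵥ q) ^ 2) * exp (ipr W (A *ᵥ q))) ≤
      unnormPosterior A lam (A *ᵥ Q₀ + W) (Q₀ + q) := by
  have h_norm : lam * enr (A *ᵥ (Q₀ + q)) ≤ lam * (enr (A *ᵥ Q₀) + enr (A *ᵥ q)) := by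
    rw [Matrix.mulVec_add]; gcongr; exact enr_add_le _ _
  have h_resid : A *ᵥ Q₀ + W - A *ᵥ (Q₀ + q) = W - A *ᵥ q := by
    rw [Matrix.mulVec_add]; abel
  rw [unnormPosterior, densityAtTruth, h_resid, enr_sub_sq, ← exp_add, ← exp_add, ← exp_add]
  gcongr
  linarith [sq_nonneg (enr (A *ᵥ q) - lam)]

/-- Symmetrising in `q` removes the noise term, since `exp x + exp (-x) ≥ 2`. -/
lemma two_mul_le_unnormPosterior_add_add_sub (A : Matrix N κ ℝ) {lam : ℝ} (hlam : 0 ≤ lam)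
    (Q₀ q : κ → ℝ) (W : N → ℝ) :
    2 * (densityAtTruth lam (A *ᵥ Q₀) W * exp (-lam ^ 2 / 2) * exp (-1 * enr (A *ᵥ q) ^ 2)) ≤
      unnormPosterior A lam (A *ᵥ Q₀ + W) (Q₀ + q) +
        unnormPosterior A lam (A *ᵥ Q₀ + W) (Q₀ + -q) := by
  have h_add := le_unnormPosterior_add A hlam Q₀ q W
  have h_sub := le_unnormPosterior_add A hlam Q₀ (-q) W
  rw [Matrix.mulVec_neg, enr_neg, ipr_neg_right] at h_sub
  have h_cosh : 2 ≤ exp (ipr W (A *ᵥ q)) + exp (-ipr W (A *ᵥ q)) := by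
    linarith [add_one_le_exp (ipr W (A *ᵥ q)), add_one_le_exp (-ipr W (A *ᵥ q))]
  have h_pos := mul_pos (densityAtTruth_pos lam (A *ᵥ Q₀) W) (exp_pos (-lam ^ 2 / 2))
  refine le_trans ?_ (add_le_add h_add h_sub)
  rw [← mul_add, ← mul_add, mul_comm 2, mul_assoc]
  gcongr

lemma unnormPosterior_le_of_ipr_le (A : Matrix N κ ℝ) {lam t : ℝ} (hlam : 0 ≤ lam)
    {u W : N → ℝ} {Q : κ → ℝ} (hW : ipr W (A *ᵥ Q - u) ≤ t * enr (A *ᵥ Q - u)) :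
    unnormPosterior A lam (u + W) Q ≤
      densityAtTruth lam u W * exp ((t + lam) ^ 2) * exp (-(1 / 4) * enr (A *ᵥ Q - u) ^ 2) := by
  have h_norm : lam * enr u ≤ lam * (enr (A *ᵥ Q) + enr (A *ᵥ Q - u)) := by
    gcongr; exact enr_le_enr_add_enr_sub _ _
  have h_resid : u + W - A *ᵥ Q = W - (A *ᵥ Q - u) := by abel
  rw [unnormPosterior, densityAtTruth, h_resid, enr_sub_sq, ← exp_add, ← exp_add]
  gcongr
  linarith [sq_nonneg (enr (A *ᵥ Q - u) / 2 - (t + lam))]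

variable [DecidableEq κ]

lemma integrable_unnormPosterior {A : Matrix N κ ℝ} (hA : 0 < gramDet A) {lam : ℝ}
    (hlam : 0 ≤ lam) (Y : N → ℝ) : Integrable (unnormPosterior A lam Y) := by
  refine ((integrable_exp_neg_mul_enr_mulVec_sq hA (b := 1 / 4) (by norm_num)).const_mul
    (exp (1 / 2 * enr Y ^ 2))).mono' (continuous_unnormPosterior A lam Y).aestronglyMeasurable
    (.of_forall fun Q => ?_)
  have h_norm : enr (A *ᵥ Q) ≤ enr Y + enr (Y - A *ᵥ Q) := enr_le_enr_add_enr_sub _ _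
  have h_sq : enr (A *ᵥ Q) ^ 2 ≤ 2 * (enr Y ^ 2 + enr (Y - A *ᵥ Q) ^ 2) :=
    (pow_le_pow_left₀ (enr_nonneg _) h_norm 2).trans add_sq_le
  rw [Real.norm_of_nonneg (unnormPosterior_pos _ _ _ _).le, unnormPosterior, ← exp_add]
  gcongr
  linarith [mul_nonneg hlam (enr_nonneg (A *ᵥ Q))]

/-- The prior-averaged pseudo-likelihood of the data `Y` over the set `S` of parameters of the
model with design matrix `A`. The factor in front is the normalising constant of the elliptical
Laplace prior, without the ratio of Gamma functions that cancels against the model weights. -/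
noncomputable def evidence (A : Matrix N κ ℝ) (lam : ℝ) (Y : N → ℝ) (S : Set (κ → ℝ)) : ℝ :=
  √(gramDet A) * (lam / √π) ^ Fintype.card κ * ∫ Q in S, unnormPosterior A lam Y Q

lemma evidence_nonneg (A : Matrix N κ ℝ) {lam : ℝ} (hlam : 0 ≤ lam) (Y : N → ℝ)
    (S : Set (κ → ℝ)) : 0 ≤ evidence A lam Y S :=
  mul_nonneg (by positivity) (integral_nonneg fun Q => (unnormPosterior_pos A lam Y Q).le)

lemma evidence_eq_zero {A : Matrix N κ ℝ} (hA : gramDet A = 0) (lam : ℝ) (Y : N → ℝ)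
    (S : Set (κ → ℝ)) : evidence A lam Y S = 0 := by
  simp [evidence, hA]

lemma evidence_mono (A : Matrix N κ ℝ) {lam : ℝ} (hlam : 0 ≤ lam) (Y : N → ℝ)
    {S T : Set (κ → ℝ)} (hST : S ⊆ T) : evidence A lam Y S ≤ evidence A lam Y T := by
  rcases (gramDet_nonneg A).eq_or_lt with hA | hA
  · rw [evidence_eq_zero hA.symm, evidence_eq_zero hA.symm]
  · exact mul_le_mul_of_nonneg_left (setIntegral_mono_set
      (integrable_unnormPosterior hA hlam Y).integrableOn
      (.of_forall fun Q => (unnormPosterior_pos A lam Y Q).le) hST.eventuallyLE) (by positivity)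

lemma densityAtTruth_mul_integral_le_integral_unnormPosterior {A : Matrix N κ ℝ}
    (hA : 0 < gramDet A) {lam : ℝ} (hlam : 0 ≤ lam) (Q₀ : κ → ℝ) (W : N → ℝ) :
    densityAtTruth lam (A *ᵥ Q₀) W * exp (-lam ^ 2 / 2) * ∫ q, exp (-1 * enr (A *ᵥ q) ^ 2) ≤
      ∫ Q, unnormPosterior A lam (A *ᵥ Q₀ + W) Q := by
  have h_int : Integrable fun q => unnormPosterior A lam (A *ᵥ Q₀ + W) (Q₀ + q) :=
    (integrable_unnormPosterior hA hlam _).comp_add_left Q₀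
  have h_mono := integral_mono
    (((integrable_exp_neg_mul_enr_mulVec_sq hA one_pos).const_mul _).const_mul _)
    (h_int.add h_int.comp_neg) (two_mul_le_unnormPosterior_add_add_sub A hlam Q₀ · W)
  simp only [Pi.add_apply] at h_mono
  rw [integral_const_mul, integral_const_mul, integral_add h_int h_int.comp_neg,
    integral_neg_eq_self (fun q => unnormPosterior A lam (A *ᵥ Q₀ + W) (Q₀ + q)),
    integral_add_left_eq_self (unnormPosterior A lam (A *ᵥ Q₀ + W)) Q₀] at h_mono
  linarith

lemma densityAtTruth_mul_le_evidence {A : Matrix N κ ℝ} (hA : 0 < gramDet A) {lam : ℝ}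
    (hlam : 0 ≤ lam) (Q₀ : κ → ℝ) (W : N → ℝ) :
    densityAtTruth lam (A *ᵥ Q₀) W * (exp (-lam ^ 2 / 2) * lam ^ Fintype.card κ) ≤
      evidence A lam (A *ᵥ Q₀ + W) Set.univ := by
  have h_gauss := sqrt_gramDet_mul_integral_exp_neg_mul_enr_mulVec_sq hA one_pos
  have h_sqrt : √π ≠ 0 := by positivity
  rw [div_one] at h_gauss
  rw [evidence, setIntegral_univ]
  calc densityAtTruth lam (A *ᵥ Q₀) W * (exp (-lam ^ 2 / 2) * lam ^ Fintype.card κ)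
      = (lam / √π) ^ Fintype.card κ * √π ^ Fintype.card κ *
          (densityAtTruth lam (A *ᵥ Q₀) W * exp (-lam ^ 2 / 2)) := by
        rw [← mul_pow, div_mul_cancel₀ _ h_sqrt]; ring
    _ = √(gramDet A) * (lam / √π) ^ Fintype.card κ * (densityAtTruth lam (A *ᵥ Q₀) W *
          exp (-lam ^ 2 / 2) * ∫ q, exp (-1 * enr (A *ᵥ q) ^ 2)) := by rw [← h_gauss]; ring
    _ ≤ _ := by
        gcongr
        exact densityAtTruth_mul_integral_le_integral_unnormPosterior hA hlam Q₀ W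

lemma setIntegral_unnormPosterior_le {A : Matrix N κ ℝ} (hA : 0 < gramDet A) {lam t : ℝ}
    (hlam : 0 ≤ lam) {u W : N → ℝ}
    (hW : ∀ Q, ipr W (A *ᵥ Q - u) ≤ t * enr (A *ᵥ Q - u)) (R : ℝ) :
    ∫ Q in {Q | R ≤ enr (A *ᵥ Q - u) ^ 2}, unnormPosterior A lam (u + W) Q ≤
      densityAtTruth lam u W * exp ((t + lam) ^ 2 - R / 8) *
        ∫ Q, exp (-(1 / 8) * enr (A *ᵥ Q) ^ 2) := by
  obtain ⟨Q₀, hQ₀⟩ := exists_enr_mulVec_sub_sq_le hA.ne' u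
  have h_meas : MeasurableSet {Q | R ≤ enr (A *ᵥ Q - u) ^ 2} :=
    measurableSet_le measurable_const (by fun_prop : Continuous _).measurable
  have h_bound : ∀ Q ∈ {Q | R ≤ enr (A *ᵥ Q - u) ^ 2}, unnormPosterior A lam (u + W) Q ≤
      densityAtTruth lam u W * exp ((t + lam) ^ 2 - R / 8) *
        exp (-(1 / 8) * enr (A *ᵥ (Q - Q₀)) ^ 2) := fun Q (hQ : R ≤ _) => by
    refine (unnormPosterior_le_of_ipr_le A hlam (hW Q)).trans ?_
    rw [mul_assoc, mul_assoc, ← exp_add, ← exp_add]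
    exact mul_le_mul_of_nonneg_left (exp_le_exp.mpr (by linarith [hQ₀ Q]))
      (densityAtTruth_pos lam u W).le
  have h_int : Integrable fun Q => densityAtTruth lam u W * exp ((t + lam) ^ 2 - R / 8) *
      exp (-(1 / 8) * enr (A *ᵥ (Q - Q₀)) ^ 2) :=
    ((integrable_exp_neg_mul_enr_mulVec_sq hA (by norm_num)).comp_sub_right Q₀).const_mul _
  refine (setIntegral_mono_on (integrable_unnormPosterior hA hlam _).integrableOn
    h_int.integrableOn h_meas h_bound).trans ((setIntegral_le_integral h_int (.of_forall fun Q =>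
      mul_nonneg (mul_pos (densityAtTruth_pos lam u W) (exp_pos _)).le (exp_pos _).le)).trans_eq ?_)
  rw [integral_const_mul,
    integral_sub_right_eq_self (fun Q => exp (-(1 / 8) * enr (A *ᵥ Q) ^ 2)) Q₀]

lemma evidence_le_of_ipr_le (A : Matrix N κ ℝ) {lam t : ℝ} (hlam : 0 ≤ lam)
    {u W : N → ℝ} (hW : ∀ Q, ipr W (A *ᵥ Q - u) ≤ t * enr (A *ᵥ Q - u)) (R : ℝ) :
    evidence A lam (u + W) {Q | R ≤ enr (A *ᵥ Q - u) ^ 2} ≤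
      densityAtTruth lam u W * (exp ((t + lam) ^ 2 - R / 8) * (3 * lam) ^ Fintype.card κ) := by
  have h_density := densityAtTruth_pos lam u W
  rcases (gramDet_nonneg A).eq_or_lt with hA | hA
  · rw [evidence_eq_zero hA.symm]; positivity
  have h_gauss := sqrt_gramDet_mul_integral_exp_neg_mul_enr_mulVec_sq hA
    (b := 1 / 8) (by norm_num)
  have h_sqrt : √(π / (1 / 8)) ≤ 3 * √π := by
    rw [Real.sqrt_le_left (by positivity), mul_pow, sq_sqrt pi_pos.le]; linarith [pi_pos]
  have h_base : lam / √π * √(π / (1 / 8)) ≤ 3 * lam := by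
    calc lam / √π * √(π / (1 / 8)) ≤ lam / √π * (3 * √π) := by gcongr
      _ = 3 * lam := by have : √π ≠ 0 := by positivity
                        field_simp
  calc evidence A lam (u + W) {Q | R ≤ enr (A *ᵥ Q - u) ^ 2}
      ≤ √(gramDet A) * (lam / √π) ^ Fintype.card κ * (densityAtTruth lam u W *
          exp ((t + lam) ^ 2 - R / 8) * ∫ Q, exp (-(1 / 8) * enr (A *ᵥ Q) ^ 2)) := by
        rw [evidence]; gcongr; exact setIntegral_unnormPosterior_le hA hlam hW R
    _ = densityAtTruth lam u W * (exp ((t + lam) ^ 2 - R / 8) *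
          (lam / √π * √(π / (1 / 8))) ^ Fintype.card κ) := by rw [mul_pow, ← h_gauss]; ring
    _ ≤ _ := by gcongr

end Evidence

section Nets

open Metric

variable {V : Type*} [NormedAddCommGroup V]

lemma packingNumber_one_le_five_pow_finrank [NormedSpace ℝ V] [FiniteDimensional ℝ V] {A : Set V}
    (hA : A ⊆ closedBall 0 2) : packingNumber 1 A ≤ 5 ^ Module.finrank ℝ V := by
  refine iSup₂_le fun C hCA => iSup_le fun hC => ?_
  by_contra! h_lt
  obtain ⟨T, hTC, hT⟩ := Set.exists_subset_encard_eq (Order.add_one_le_of_lt h_lt)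
  have hT_fin : T.Finite := Set.finite_of_encard_eq_coe (by exact_mod_cast hT)
  have h_sep : ∀ c ∈ hT_fin.toFinset, ∀ d ∈ hT_fin.toFinset, c ≠ d → 1 ≤ ‖c - d‖ := by
    intro c hc d hd hcd
    have h_edist : (1 : ℝ≥0∞) < edist c d :=
      hC (hTC (hT_fin.mem_toFinset.mp hc)) (hTC (hT_fin.mem_toFinset.mp hd)) hcd
    rw [edist_dist, ENNReal.one_lt_ofReal, dist_eq_norm] at h_edist
    exact h_edist.le
  have h_card := Besicovitch.card_le_of_separated hT_fin.toFinset
    (fun c hc => by simpa using hA (hCA (hTC (hT_fin.mem_toFinset.mp hc)))) h_sep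
  rw [hT_fin.encard_eq_coe_toFinset_card] at hT
  norm_cast at hT
  lia

variable (V) in
lemma exists_finset_half_norm_le_inner [InnerProductSpace ℝ V] [FiniteDimensional ℝ V] :
    ∃ s : Finset V, s.card ≤ 5 ^ Module.finrank ℝ V ∧ (∀ c ∈ s, ‖c‖ = 1) ∧
      ∀ w : V, w ≠ 0 → ∃ c ∈ s, ‖w‖ / 2 ≤ inner ℝ w c := by
  have h_le : coveringNumber 1 (sphere (0 : V) 2) ≤ 5 ^ Module.finrank ℝ V :=
    (coveringNumber_le_packingNumber _ _).trans
      (packingNumber_one_le_five_pow_finrank sphere_subset_closedBall)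
  have h_ne_top : coveringNumber 1 (sphere (0 : V) 2) ≠ ⊤ :=
    (h_le.trans_lt (by exact_mod_cast ENat.natCast_lt_top (5 ^ Module.finrank ℝ V))).ne
  set C := minimalCover 1 (sphere (0 : V) 2)
  have hC_fin : C.Finite := finite_minimalCover
  refine ⟨hC_fin.toFinset.image fun c => (1 / 2 : ℝ) • c, ?_, ?_, fun w hw => ?_⟩
  · refine Finset.card_image_le.trans ?_
    rw [← encard_minimalCover h_ne_top, hC_fin.encard_eq_coe_toFinset_card] at h_le
    exact_mod_cast h_le
  · simp only [Finset.forall_mem_image, hC_fin.mem_toFinset]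
    intro c hc
    rw [norm_smul, mem_sphere_zero_iff_norm.mp (minimalCover_subset hc)]
    norm_num
  · have hw_norm : 0 < ‖w‖ := norm_pos_iff.mpr hw
    have h_mem : (2 / ‖w‖) • w ∈ sphere (0 : V) 2 := by
      rw [mem_sphere_zero_iff_norm, norm_smul, Real.norm_of_nonneg (by positivity),
        div_mul_cancel₀ _ hw_norm.ne']
    obtain ⟨c, hc, h_edist⟩ := isCover_minimalCover h_ne_top h_mem
    have h_dist : ‖(2 / ‖w‖) • w - c‖ ≤ 1 := by
      rw [← dist_eq_norm, ← ENNReal.ofReal_le_one, ← edist_dist]; exact h_edist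
    have h_inner : inner ℝ w ((2 / ‖w‖) • w - c) ≤ ‖w‖ :=
      (real_inner_le_norm _ _).trans (mul_le_of_le_one_right hw_norm.le h_dist)
    refine ⟨_, Finset.mem_image_of_mem _ (hC_fin.mem_toFinset.mpr hc), ?_⟩
    rw [inner_sub_right, inner_smul_right, real_inner_self_eq_norm_sq, sq, ← mul_assoc,
      div_mul_cancel₀ _ hw_norm.ne'] at h_inner
    rw [inner_smul_right]
    linarith

end Nets

section SubGaussian

variable {N Ω : Type*} [Fintype N] [MeasurableSpace Ω] {P : Measure Ω} {ρ : ℝ} {W : Ω → N → ℝ}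

lemma subG.measure_lt_inner_le (hW : subG P ρ W) {x : EuclideanSpace ℝ N} (hx : ‖x‖ = 1) {t : ℝ}
    (ht : 0 < t) : P {ω | t < inner ℝ (WithLp.toLp 2 (W ω)) x} ≤
      ENNReal.ofReal (exp (-ρ * t ^ 2 / 2)) := by
  refine (measure_mono fun ω (hω : t < _) => ?_).trans (hW (WithLp.ofLp x) ?_ t ht)
  · rw [Set.mem_ofPred_eq, ipr_eq_inner]
    exact hω.trans_le (le_abs_self _)
  · rwa [enr_eq_norm]

lemma subG.measure_exists_mem_submodule_le (hW : subG P ρ W)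
    (V : Submodule ℝ (EuclideanSpace ℝ N)) {t : ℝ} (ht : 0 < t) :
    P {ω | ∃ v : N → ℝ, WithLp.toLp 2 v ∈ V ∧ t * enr v < ipr (W ω) v} ≤
      5 ^ Module.finrank ℝ V * ENNReal.ofReal (exp (-ρ * (t / 2) ^ 2 / 2)) := by
  obtain ⟨s, hs_card, hs_norm, hs⟩ := exists_finset_half_norm_le_inner V
  have h_cover : {ω | ∃ v : N → ℝ, WithLp.toLp 2 v ∈ V ∧ t * enr v < ipr (W ω) v} ⊆
      ⋃ c ∈ s, {ω | t / 2 < inner ℝ (WithLp.toLp 2 (W ω)) (c : EuclideanSpace ℝ N)} := by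
    rintro ω ⟨v, hv, h_lt⟩
    set w := V.orthogonalProjectionOnto (WithLp.toLp 2 (W ω))
    have h_proj (x : V) : inner ℝ (WithLp.toLp 2 (W ω)) (x : EuclideanSpace ℝ N) = inner ℝ w x :=
      (Submodule.inner_orthogonalProjectionOnto_eq_of_mem_right x _).symm
    have hw : t < ‖w‖ := by
      rw [enr_eq_norm, ipr_eq_inner, h_proj ⟨_, hv⟩] at h_lt
      exact lt_of_mul_lt_mul_right (h_lt.trans_le (real_inner_le_norm w _)) (norm_nonneg _)
    obtain ⟨c, hc, h_half⟩ := hs w (norm_pos_iff.mp (ht.trans hw))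
    refine Set.mem_biUnion hc ?_
    rw [Set.mem_ofPred_eq, h_proj]
    linarith
  calc P {ω | ∃ v : N → ℝ, WithLp.toLp 2 v ∈ V ∧ t * enr v < ipr (W ω) v}
      ≤ ∑ c ∈ s, P {ω | t / 2 < inner ℝ (WithLp.toLp 2 (W ω)) (c : EuclideanSpace ℝ N)} :=
        (measure_mono h_cover).trans (measure_biUnion_finset_le _ _)
    _ ≤ s.card • ENNReal.ofReal (exp (-ρ * (t / 2) ^ 2 / 2)) :=
        Finset.sum_le_card_nsmul _ _ _ fun c hc =>
          hW.measure_lt_inner_le (hs_norm c hc) (by positivity)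
    _ ≤ 5 ^ Module.finrank ℝ V * ENNReal.ofReal (exp (-ρ * (t / 2) ^ 2 / 2)) := by
        rw [nsmul_eq_mul]; gcongr; exact_mod_cast hs_card

lemma subG.measure_exists_mulVec_sub_le {κ : Type*} [Fintype κ] (hW : subG P ρ W)
    (A : Matrix N κ ℝ) (u : N → ℝ) {t : ℝ} (ht : 0 < t) :
    P {ω | ∃ Q, t * enr (A *ᵥ Q - u) < ipr (W ω) (A *ᵥ Q - u)} ≤
      5 ^ (Fintype.card κ + 1) * ENNReal.ofReal (exp (-ρ * (t / 2) ^ 2 / 2)) := by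
  let T : (κ → ℝ) →ₗ[ℝ] EuclideanSpace ℝ N :=
    (WithLp.linearEquiv 2 ℝ (N → ℝ)).symm.toLinearMap ∘ₗ A.mulVecLin
  let V : Submodule ℝ (EuclideanSpace ℝ N) := LinearMap.range T ⊔ ℝ ∙ WithLp.toLp 2 u
  have hV : Module.finrank ℝ V ≤ Fintype.card κ + 1 :=
    (Submodule.finrank_add_le_finrank_add_finrank _ _).trans <| add_le_add
      ((LinearMap.finrank_range_le T).trans_eq (Module.finrank_pi ℝ))
      ((finrank_span_le_card _).trans (by simp))
  have h_mem (Q : κ → ℝ) : WithLp.toLp 2 (A *ᵥ Q - u) ∈ V :=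
    V.sub_mem (Submodule.mem_sup_left ⟨Q, rfl⟩)
      (Submodule.mem_sup_right (Submodule.mem_span_singleton_self _))
  have h_subset : {ω | ∃ Q, t * enr (A *ᵥ Q - u) < ipr (W ω) (A *ᵥ Q - u)} ⊆
      {ω | ∃ v : N → ℝ, WithLp.toLp 2 v ∈ V ∧ t * enr v < ipr (W ω) v} := by
    rintro ω ⟨Q, hQ⟩
    exact ⟨_, h_mem Q, hQ⟩
  calc P {ω | ∃ Q, t * enr (A *ᵥ Q - u) < ipr (W ω) (A *ᵥ Q - u)}
      ≤ 5 ^ Module.finrank ℝ V * ENNReal.ofReal (exp (-ρ * (t / 2) ^ 2 / 2)) :=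
        (measure_mono h_subset).trans (hW.measure_exists_mem_submodule_le V ht)
    _ ≤ 5 ^ (Fintype.card κ + 1) * ENNReal.ofReal (exp (-ρ * (t / 2) ^ 2 / 2)) := by
        gcongr; norm_num

end SubGaussian

section ExponentialBounds

lemma five_le_exp_two : 5 ≤ exp 2 := by
  have h_exp : exp 2 = exp 1 * exp 1 := by rw [← exp_add]; norm_num
  nlinarith [exp_one_gt_d9]

lemma pow_le_exp_abs_log_mul {x r : ℝ} (hx : 0 < x) {d : ℕ} (hd : d ≤ r) :
    x ^ d ≤ exp (|log x| * r) := by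
  rw [← exp_log (pow_pos hx d), log_pow, mul_comm]
  exact exp_le_exp.mpr (mul_le_mul (le_abs_self _) hd d.cast_nonneg (abs_nonneg _))

lemma exp_neg_abs_log_mul_le_pow {x r : ℝ} (hx : 0 < x) {d : ℕ} (hd : d ≤ r) :
    exp (-(|log x| * r)) ≤ x ^ d := by
  rw [← inv_le_inv₀ (pow_pos hx d) (exp_pos _), ← exp_neg, neg_neg, ← inv_pow, ← abs_neg,
    ← log_inv]
  exact pow_le_exp_abs_log_mul (inv_pos.mpr hx) hd

lemma abs_log_three_mul_le {x : ℝ} (hx : 0 < x) : |log (3 * x)| ≤ |log x| + 2 := by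
  have h_log_three : |log 3| ≤ 2 := by
    rw [abs_of_nonneg (log_nonneg (by norm_num))]
    linarith [log_le_sub_one_of_pos (zero_lt_three' ℝ)]
  rw [log_mul three_ne_zero hx.ne', add_comm]
  exact (abs_add_le _ _).trans (by gcongr)

lemma two_mul_exp_neg_two_mul_le {s : ℝ} (hs : 1 ≤ s) : 2 * exp (-2 * s) ≤ exp (-s) := by
  have h_exp : exp (-2 * s) = exp (-s) * exp (-s) := by rw [← exp_add]; ring_nf
  have h_half : 2 * exp (-s) ≤ 1 := by
    rw [exp_neg, ← div_eq_mul_inv, div_le_one (exp_pos s)]; linarith [add_one_le_exp s]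
  rw [h_exp, ← mul_assoc]
  exact mul_le_of_le_one_left (exp_pos _).le h_half

/-- Where `f` is not integrable, the bound relies on the convention that its integral is `0`. -/
lemma integral_le_add_measureReal {Ω : Type*} [MeasurableSpace Ω] {P : Measure Ω}
    [IsProbabilityMeasure P] {f : Ω → ℝ} {E : Set Ω} {ε : ℝ} (hε : 0 ≤ ε) (hf_one : ∀ ω, f ω ≤ 1)
    (hf : ∀ ω ∉ E, f ω ≤ ε) : ∫ ω, f ω ∂P ≤ ε + P.real E := by
  by_cases hf_int : Integrable f P
  swap
  · rw [integral_undef hf_int]; positivity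
  set E' := toMeasurable P E
  have hE' : MeasurableSet E' := measurableSet_toMeasurable P E
  have h_ind_int : Integrable (E'.indicator fun _ => (1 : ℝ)) P :=
    (integrable_const 1).indicator hE'
  have h_le : ∀ ω, f ω ≤ ε + E'.indicator (fun _ => (1 : ℝ)) ω := fun ω => by
    by_cases hω : ω ∈ E'
    · rw [Set.indicator_of_mem hω]; linarith [hf_one ω]
    · rw [Set.indicator_of_notMem hω, add_zero]
      exact hf ω fun hωE => hω (subset_toMeasurable P E hωE)
  calc ∫ ω, f ω ∂P ≤ ∫ ω, (ε + E'.indicator (fun _ => (1 : ℝ)) ω) ∂P :=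
        integral_mono hf_int ((integrable_const _).add h_ind_int) h_le
    _ = ε + P.real E := by
        rw [integral_add (integrable_const _) h_ind_int, integral_indicator_const _ hE']
        simp [E', Measure.real]

end ExponentialBounds

section StructuredLinearModel

variable {N ι Θ Ω : Type*} [Fintype N] [Fintype ι] {κ : ι → Type*} [∀ i, Fintype (κ i)]
  [MeasurableSpace Ω] {P : Measure Ω} {W : Ω → N → ℝ} {A : (i : ι) → Matrix N (κ i) ℝ}
  {r w : ι → ℝ} {lam ρ D s R : ℝ} {u : N → ℝ}

/-- `r` measures the complexity of the models of a finite family: `r i` dominates the dimension of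
model `i`, and a Kraft-type inequality limits the number of models of each complexity. -/
structure IsComplexity (κ : ι → Type*) [∀ i, Fintype (κ i)] (r : ι → ℝ) : Prop where
  card_le : ∀ i, (Fintype.card (κ i) : ℝ) ≤ r i
  sum_exp_le_one : ∑ i, exp (-2 * r i) ≤ 1

/-- The model weights `w` penalise the complexity `r` exponentially, at rates between `D` and
`D + 1`. -/
structure IsComplexityPrior (κ : ι → Type*) [∀ i, Fintype (κ i)] (D : ℝ) (r w : ι → ℝ) : Prop
    extends IsComplexity κ r where
  le_exp : ∀ i, w i ≤ exp (-D * r i)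
  exp_le : ∀ i, exp (-(D + 1) * r i) ≤ w i

/-- The size, per unit of loss, of the noise tolerated at total complexity `x`. With the factor
`40`, the probability `exp (-5 * x)` of exceeding half of it beats the size of a net. -/
noncomputable def noiseLevel (ρ x : ℝ) : ℝ := √(40 / ρ * x)

/-- The noise `W` correlates little with every difference between a fitted value of some model and
the signal `u`, uniformly over all models. -/
def NoiseControlled (ρ : ℝ) (A : (i : ι) → Matrix N (κ i) ℝ) (r : ι → ℝ) (s : ℝ)
    (u W : N → ℝ) : Prop :=
  ∀ i Q, ipr W (A i *ᵥ Q - u) ≤ noiseLevel ρ (r i + s) * enr (A i *ᵥ Q - u)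

/-- Some identifiable model of complexity at most `s` contains the signal `u`. -/
def IsRepresentable [∀ i, DecidableEq (κ i)] (A : (i : ι) → Matrix N (κ i) ℝ) (r : ι → ℝ) (s : ℝ)
    (u : N → ℝ) : Prop :=
  ∃ i Q, r i ≤ s ∧ 0 < gramDet (A i) ∧ A i *ᵥ Q = u

/-- The constant relating prior strength and contraction radius in posterior contraction for
structured linear models. The summand `80 / ρ` pays for the noise, the others for the Laplace
prior and its normalising constant. -/
noncomputable def contractionConst (lam ρ : ℝ) : ℝ := 80 / ρ + 3 * lam ^ 2 + |log lam| + 4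

lemma contractionConst_pos (lam : ℝ) (hρ : 0 < ρ) : 0 < contractionConst lam ρ := by
  unfold contractionConst; positivity

lemma IsComplexity.nonneg (hr : IsComplexity κ r) (i : ι) : 0 ≤ r i :=
  (Nat.cast_nonneg _).trans (hr.card_le i)

lemma IsComplexityPrior.weight_nonneg (hw : IsComplexityPrior κ D r w) (i : ι) : 0 ≤ w i :=
  (exp_pos _).le.trans (hw.exp_le i)

lemma noiseLevel_sq (hρ : 0 < ρ) {x : ℝ} (hx : 0 ≤ x) : noiseLevel ρ x ^ 2 = 40 / ρ * x :=
  sq_sqrt (by positivity)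

lemma subG.measure_exists_noiseLevel_lt_le (hW : subG P ρ W) (hρ : 0 < ρ)
    (hr : IsComplexity κ r) (hs : 1 ≤ s) (i : ι) :
    P {ω | ∃ Q, noiseLevel ρ (r i + s) * enr (A i *ᵥ Q - u) < ipr (W ω) (A i *ᵥ Q - u)} ≤
      ENNReal.ofReal (exp (-2 * r i) * exp (-2 * s)) := by
  have h_pos : 0 < r i + s := by linarith [hr.nonneg i]
  refine (hW.measure_exists_mulVec_sub_le (A i) u (sqrt_pos.mpr (by positivity))).trans ?_
  have h_exponent : -ρ * (noiseLevel ρ (r i + s) / 2) ^ 2 / 2 = -5 * (r i + s) := by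
    rw [div_pow, noiseLevel_sq hρ h_pos.le]; field_simp; ring
  change 5 ^ (Fintype.card (κ i) + 1) *
    ENNReal.ofReal (exp (-ρ * (noiseLevel ρ (r i + s) / 2) ^ 2 / 2)) ≤ _
  rw [h_exponent, ← ENNReal.ofReal_ofNat 5, ← ENNReal.ofReal_pow (by norm_num),
    ← ENNReal.ofReal_mul (by positivity)]
  refine ENNReal.ofReal_le_ofReal ?_
  calc (5 : ℝ) ^ (Fintype.card (κ i) + 1) * exp (-5 * (r i + s))
      ≤ exp 2 ^ (Fintype.card (κ i) + 1) * exp (-5 * (r i + s)) := by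
        gcongr; exact five_le_exp_two
    _ = exp ((Fintype.card (κ i) + 1 : ℕ) * 2 + -5 * (r i + s)) := by
        rw [← exp_nat_mul, ← exp_add]
    _ ≤ exp (-2 * r i) * exp (-2 * s) := by
        rw [← exp_add]
        exact exp_le_exp.mpr (by push_cast; linarith [hr.nonneg i, hr.card_le i])

lemma subG.measureReal_not_noiseControlled_le (hW : subG P ρ W) (hρ : 0 < ρ)
    (hr : IsComplexity κ r) (hs : 1 ≤ s) :
    P.real {ω | ¬ NoiseControlled ρ A r s u (W ω)} ≤ exp (-2 * s) := by
  have h_union : {ω | ¬ NoiseControlled ρ A r s u (W ω)} = ⋃ i,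
      {ω | ∃ Q, noiseLevel ρ (r i + s) * enr (A i *ᵥ Q - u) < ipr (W ω) (A i *ᵥ Q - u)} := by
    ext ω; simp [NoiseControlled]
  refine ENNReal.toReal_le_of_le_ofReal (exp_pos _).le ?_
  calc P {ω | ¬ NoiseControlled ρ A r s u (W ω)}
      ≤ ∑ i, ENNReal.ofReal (exp (-2 * r i) * exp (-2 * s)) := by
        rw [h_union]
        exact (measure_iUnion_fintype_le _ _).trans (Finset.sum_le_sum fun i _ =>
          hW.measure_exists_noiseLevel_lt_le hρ hr hs i)
    _ = ENNReal.ofReal ((∑ i, exp (-2 * r i)) * exp (-2 * s)) := by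
        rw [Finset.sum_mul, ENNReal.ofReal_sum_of_nonneg fun i _ => by positivity]
    _ ≤ ENNReal.ofReal (exp (-2 * s)) :=
        ENNReal.ofReal_le_ofReal (mul_le_of_le_one_left (exp_pos _).le hr.sum_exp_le_one)

variable [∀ i, DecidableEq (κ i)]

lemma gpostP_eq_div (w : ι → ℝ) (A : (i : ι) → Matrix N (κ i) ℝ) (emb : (i : ι) → (κ i → ℝ) → Θ)
    (lam : ℝ) (Y : N → ℝ) (Sel : Set ι) (U : Set Θ) :
    gpostP w A emb lam Y Sel U =
      (∑ i, (if i ∈ Sel then w i else 0) * evidence (A i) lam Y {Q | emb i Q ∈ U}) /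
        ∑ i, w i * evidence (A i) lam Y Set.univ := by
  simp only [gpostP, evidence, setIntegral_univ, mul_assoc]
  rfl

lemma gpostP_le_one (hw : ∀ i, 0 ≤ w i) (emb : (i : ι) → (κ i → ℝ) → Θ) (hlam : 0 ≤ lam)
    (Y : N → ℝ) (Sel : Set ι) (U : Set Θ) : gpostP w A emb lam Y Sel U ≤ 1 := by
  rw [gpostP_eq_div]
  refine div_le_one_of_le₀ (Finset.sum_le_sum fun i _ => mul_le_mul ?_
    (evidence_mono _ hlam _ (Set.subset_univ _)) (evidence_nonneg _ hlam _ _) (hw i))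
    (Finset.sum_nonneg fun i _ => mul_nonneg (hw i) (evidence_nonneg _ hlam _ _))
  split_ifs
  exacts [le_rfl, hw i]

lemma gpostP_eq_zero (hA : ∀ i, gramDet (A i) = 0) (w : ι → ℝ) (emb : (i : ι) → (κ i → ℝ) → Θ)
    (lam : ℝ) (Y : N → ℝ) (Sel : Set ι) (U : Set Θ) : gpostP w A emb lam Y Sel U = 0 := by
  simp [gpostP_eq_div, evidence_eq_zero (hA _)]

lemma IsComplexityPrior.le_sum_mul_evidence (hw : IsComplexityPrior κ D r w) (hlam : 0 < lam)
    (hD : 0 ≤ D) (hs : 1 ≤ s) (hu : IsRepresentable A r s u) (W : N → ℝ) :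
    densityAtTruth lam u W * exp (-(D + 1 + lam ^ 2 / 2 + |log lam|) * s) ≤
      ∑ i, w i * evidence (A i) lam (u + W) Set.univ := by
  obtain ⟨i, Q, hi, hA, rfl⟩ := hu
  have h_nonneg (j : ι) : 0 ≤ w j * evidence (A j) lam (A i *ᵥ Q + W) Set.univ :=
    mul_nonneg (hw.weight_nonneg j) (evidence_nonneg _ hlam.le _ _)
  have h_prior : exp (-(D + 1) * s) ≤ w i := (hw.exp_le i).trans' (by
    rw [exp_le_exp, neg_mul, neg_mul, neg_le_neg_iff]; gcongr)
  have h_volume : exp (-(|log lam| * s)) ≤ lam ^ Fintype.card (κ i) :=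
    exp_neg_abs_log_mul_le_pow hlam ((hw.card_le i).trans hi)
  have h_shift : exp (-(lam ^ 2 / 2) * s) ≤ exp (-lam ^ 2 / 2) := by
    rw [exp_le_exp]; nlinarith [sq_nonneg lam]
  calc densityAtTruth lam (A i *ᵥ Q) W * exp (-(D + 1 + lam ^ 2 / 2 + |log lam|) * s)
      = exp (-(D + 1) * s) * (densityAtTruth lam (A i *ᵥ Q) W *
          (exp (-(lam ^ 2 / 2) * s) * exp (-(|log lam| * s)))) := by
        rw [mul_left_comm, ← exp_add, ← exp_add]; ring_nf
    _ ≤ w i * (densityAtTruth lam (A i *ᵥ Q) W *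
          (exp (-lam ^ 2 / 2) * lam ^ Fintype.card (κ i))) := by
        have h_density := densityAtTruth_pos lam (A i *ᵥ Q) W
        have h_weight := hw.weight_nonneg i
        gcongr
    _ ≤ w i * evidence (A i) lam (A i *ᵥ Q + W) Set.univ :=
        mul_le_mul_of_nonneg_left (densityAtTruth_mul_le_evidence hA hlam.le Q W)
          (hw.weight_nonneg i)
    _ ≤ ∑ j, w j * evidence (A j) lam (A i *ᵥ Q + W) Set.univ :=
        Finset.single_le_sum (fun j _ => h_nonneg j) (Finset.mem_univ i)

lemma IsComplexityPrior.mul_evidence_le (hw : IsComplexityPrior κ D r w) (hlam : 0 < lam)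
    (hρ : 0 < ρ) (hs : 1 ≤ s) {W : N → ℝ} (hW : NoiseControlled ρ A r s u W) {i : ι}
    (hi : (D + contractionConst lam ρ) * s ≤ (D - contractionConst lam ρ) * r i + R / 8) :
    w i * evidence (A i) lam (u + W) {Q | R ≤ enr (A i *ᵥ Q - u) ^ 2} ≤
      exp (-2 * r i) * (exp (-2 * s) *
        (densityAtTruth lam u W * exp (-(D + 1 + lam ^ 2 / 2 + |log lam|) * s))) := by
  have hr := hw.nonneg i
  have h_density := densityAtTruth_pos lam u W
  have h_volume : (3 * lam) ^ Fintype.card (κ i) ≤ exp ((|log lam| + 2) * r i) :=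
    (pow_le_exp_abs_log_mul (by positivity) (hw.card_le i)).trans (by
      gcongr; exact abs_log_three_mul_le hlam)
  have h_noise : (noiseLevel ρ (r i + s) + lam) ^ 2 ≤ 80 / ρ * (r i + s) + 2 * lam ^ 2 * s := by
    refine add_sq_le.trans ?_
    rw [noiseLevel_sq hρ (by positivity)]
    nlinarith [sq_nonneg lam, show 2 * (40 / ρ * (r i + s)) = 80 / ρ * (r i + s) by ring]
  calc w i * evidence (A i) lam (u + W) {Q | R ≤ enr (A i *ᵥ Q - u) ^ 2}
      ≤ exp (-D * r i) * (densityAtTruth lam u W *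
          (exp ((noiseLevel ρ (r i + s) + lam) ^ 2 - R / 8) * exp ((|log lam| + 2) * r i))) := by
        refine mul_le_mul (hw.le_exp i) ((evidence_le_of_ipr_le (A i) hlam.le (hW i) R).trans ?_)
          (evidence_nonneg _ hlam.le _ _) (exp_pos _).le
        gcongr
    _ = densityAtTruth lam u W * exp (-D * r i + (noiseLevel ρ (r i + s) + lam) ^ 2 - R / 8 +
          (|log lam| + 2) * r i) := by
        rw [mul_left_comm, ← exp_add, ← exp_add]; ring_nf
    _ ≤ densityAtTruth lam u W * exp (-2 * r i + -2 * s +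
          -(D + 1 + lam ^ 2 / 2 + |log lam|) * s) := by
        refine mul_le_mul_of_nonneg_left (exp_le_exp.mpr ?_) h_density.le
        unfold contractionConst at hi
        nlinarith [mul_nonneg (sq_nonneg lam) hr, mul_nonneg (sq_nonneg lam) (zero_le_one.trans hs)]
    _ = _ := by rw [exp_add, exp_add]; ring

lemma IsComplexityPrior.gpostP_le_exp (hw : IsComplexityPrior κ D r w) (hlam : 0 < lam)
    (hρ : 0 < ρ) (hD : 0 ≤ D) (hs : 1 ≤ s) (hu : IsRepresentable A r s u) {W : N → ℝ}
    (hW : NoiseControlled ρ A r s u W) {emb : (i : ι) → (κ i → ℝ) → Θ} {Sel : Set ι} {U : Set Θ}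
    (hSel : ∀ i ∈ Sel,
      (D + contractionConst lam ρ) * s ≤ (D - contractionConst lam ρ) * r i + R / 8)
    (hU : ∀ i ∈ Sel, ∀ Q, emb i Q ∈ U → R ≤ enr (A i *ᵥ Q - u) ^ 2) :
    gpostP w A emb lam (u + W) Sel U ≤ exp (-2 * s) := by
  set L := densityAtTruth lam u W * exp (-(D + 1 + lam ^ 2 / 2 + |log lam|) * s)
  have hL_pos : 0 < L := mul_pos (densityAtTruth_pos lam u W) (exp_pos _)
  have h_denom : L ≤ ∑ i, w i * evidence (A i) lam (u + W) Set.univ :=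
    hw.le_sum_mul_evidence hlam hD hs hu W
  have h_term (i : ι) : (if i ∈ Sel then w i else 0) *
      evidence (A i) lam (u + W) {Q | emb i Q ∈ U} ≤ exp (-2 * r i) * (exp (-2 * s) * L) := by
    split_ifs with hi
    · exact (mul_le_mul_of_nonneg_left (evidence_mono _ hlam.le _ (hU i hi))
        (hw.weight_nonneg i)).trans (hw.mul_evidence_le hlam hρ hs hW (hSel i hi))
    · rw [zero_mul]; positivity
  rw [gpostP_eq_div, div_le_iff₀ (hL_pos.trans_le h_denom)]
  calc ∑ i, (if i ∈ Sel then w i else 0) * evidence (A i) lam (u + W) {Q | emb i Q ∈ U}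
      ≤ (∑ i, exp (-2 * r i)) * (exp (-2 * s) * L) := by
        rw [Finset.sum_mul]; exact Finset.sum_le_sum fun i _ => h_term i
    _ ≤ exp (-2 * s) * L := mul_le_of_le_one_left (by positivity) hw.sum_exp_le_one
    _ ≤ _ := by gcongr

variable [IsProbabilityMeasure P]

lemma IsComplexityPrior.integral_gpostP_le (hw : IsComplexityPrior κ D r w) (hlam : 0 < lam)
    (hρ : 0 < ρ) (hD : 0 ≤ D) (hs : 1 ≤ s) (hu : IsRepresentable A r s u) (hW : subG P ρ W)
    {emb : (i : ι) → (κ i → ℝ) → Θ} {Sel : Set ι} {U : Set Θ}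
    (hSel : ∀ i ∈ Sel,
      (D + contractionConst lam ρ) * s ≤ (D - contractionConst lam ρ) * r i + R / 8)
    (hU : ∀ i ∈ Sel, ∀ Q, emb i Q ∈ U → R ≤ enr (A i *ᵥ Q - u) ^ 2) :
    ∫ ω, gpostP w A emb lam (u + W ω) Sel U ∂P ≤ exp (-s) := by
  calc ∫ ω, gpostP w A emb lam (u + W ω) Sel U ∂P
      ≤ exp (-2 * s) + P.real {ω | ¬ NoiseControlled ρ A r s u (W ω)} :=
        integral_le_add_measureReal (exp_pos _).le
          (fun ω => gpostP_le_one hw.weight_nonneg emb hlam.le _ _ _)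
          fun ω hω => hw.gpostP_le_exp hlam hρ hD hs hu (not_not.mp hω) hSel hU
    _ ≤ exp (-2 * s) + exp (-2 * s) := by
        gcongr; exact hW.measureReal_not_noiseControlled_le hρ hw.toIsComplexity hs
    _ = 2 * exp (-2 * s) := (two_mul _).symm
    _ ≤ exp (-s) := two_mul_exp_neg_two_mul_le hs

lemma IsComplexityPrior.integral_gpostP_complexity_le (hw : IsComplexityPrior κ D r w)
    (hlam : 0 < lam) (hρ : 0 < ρ) {δ : ℝ} (hδ : 0 < δ)
    (hD : contractionConst lam ρ * (2 + δ) / δ ≤ D) (hs : 1 ≤ s) (hu : IsRepresentable A r s u)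
    (hW : subG P ρ W) (emb : (i : ι) → (κ i → ℝ) → Θ) (U : Set Θ) :
    ∫ ω, gpostP w A emb lam (u + W ω) {i | (1 + δ) * s < r i} U ∂P ≤ exp (-s) := by
  have hc := contractionConst_pos lam hρ
  rw [div_le_iff₀ hδ] at hD
  have hcD : contractionConst lam ρ ≤ D := by nlinarith
  refine hw.integral_gpostP_le (R := 0) hlam hρ (hc.le.trans hcD) hs hu hW
    (fun i (hi : (1 + δ) * s < r i) => ?_) fun i _ Q _ => sq_nonneg _
  calc (D + contractionConst lam ρ) * s
      ≤ (D - contractionConst lam ρ) * (1 + δ) * s := by gcongr; linarith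
    _ ≤ (D - contractionConst lam ρ) * r i := by
        rw [mul_assoc]; exact mul_le_mul_of_nonneg_left hi.le (sub_nonneg.mpr hcD)
    _ = _ := by ring

lemma IsComplexityPrior.integral_gpostP_loss_le (hw : IsComplexityPrior κ D r w)
    (hlam : 0 < lam) (hρ : 0 < ρ) (hD : contractionConst lam ρ ≤ D) (hs : 1 ≤ s)
    (hu : IsRepresentable A r s u) (hW : subG P ρ W) (Sel : Set ι) :
    ∫ ω, gpostP w A (fun i Q => A i *ᵥ Q) lam (u + W ω) Sel
      {v | 8 * (D + contractionConst lam ρ) * s < enr (v - u) ^ 2} ∂P ≤ exp (-s) := by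
  refine hw.integral_gpostP_le (R := 8 * (D + contractionConst lam ρ) * s) hlam hρ
    ((contractionConst_pos lam hρ).le.trans hD) hs hu hW (fun i _ => ?_) fun i _ Q hQ => le_of_lt hQ
  linarith [mul_nonneg (sub_nonneg.mpr hD) (hw.nonneg i)]

end StructuredLinearModel

section MultitaskRate

/-- The minimax rate `pk + m log k` of multi-task learning with `k` clusters. -/
noncomputable def multitaskRate (p m k : ℕ) : ℝ := p * k + m * log k

lemma mul_le_multitaskRate (p m k : ℕ) : (p * k : ℝ) ≤ multitaskRate p m k :=
  le_add_of_nonneg_right (mul_nonneg m.cast_nonneg (log_natCast_nonneg k))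

lemma natCast_le_multitaskRate {p : ℕ} (hp : 1 ≤ p) (m k : ℕ) : (k : ℝ) ≤ multitaskRate p m k :=
  (le_mul_of_one_le_left k.cast_nonneg (by exact_mod_cast hp)).trans (mul_le_multitaskRate p m k)

lemma multitaskRate_mono (p m : ℕ) {k l : ℕ} (hk : 1 ≤ k) (hkl : k ≤ l) :
    multitaskRate p m k ≤ multitaskRate p m l := by
  have h_log : log k ≤ log l := log_le_log (by exact_mod_cast hk) (by exact_mod_cast hkl)
  unfold multitaskRate
  gcongr

lemma pow_le_exp_multitaskRate (p m : ℕ) {k : ℕ} (hk : 1 ≤ k) :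
    (k : ℝ) ^ m ≤ exp (multitaskRate p m k) := by
  have h_pos : (0 : ℝ) < k := by exact_mod_cast hk
  rw [← exp_log (pow_pos h_pos m), log_pow, exp_le_exp, multitaskRate]
  exact le_add_of_nonneg_left (by positivity)

lemma sum_exp_neg_multitaskRate_le_one (p m : ℕ) :
    ∑ k : Fin p, exp (-multitaskRate p m (k + 1)) ≤ 1 := by
  have h_half : exp (-1) ≤ 1 / 2 := by
    rw [exp_neg, ← one_div]
    exact one_div_le_one_div_of_le two_pos (by linarith [add_one_le_exp 1])
  have h_term (k : Fin p) : exp (-multitaskRate p m (k + 1)) ≤ 1 / 2 * (1 / 2) ^ (k : ℕ) :=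
    calc exp (-multitaskRate p m (k + 1)) ≤ exp ((k + 1 : ℕ) * -1) := by
          rw [exp_le_exp]; linarith [natCast_le_multitaskRate k.pos m (k + 1)]
      _ = exp (-1) ^ ((k : ℕ) + 1) := exp_nat_mul _ _
      _ ≤ (1 / 2) ^ ((k : ℕ) + 1) := by gcongr
      _ = 1 / 2 * (1 / 2) ^ (k : ℕ) := pow_succ' _ _
  calc ∑ k : Fin p, exp (-multitaskRate p m (k + 1))
      ≤ 1 / 2 * ∑ k ∈ Finset.range p, (1 / 2 : ℝ) ^ k := by
        rw [Finset.mul_sum, ← Fin.sum_univ_eq_sum_range fun k => 1 / 2 * (1 / 2 : ℝ) ^ k]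
        exact Finset.sum_le_sum fun k _ => h_term k
    _ ≤ 1 := by linarith [sum_geometric_two_le p]

end MultitaskRate

section Clustering

variable {n p m ks : ℕ}

/-- The models of multi-task learning: an assignment of the `m` tasks to `k + 1` clusters, where
`k : Fin p`. -/
abbrev Clustering (p m : ℕ) := Σ k : Fin p, (Fin m → Fin ((k : ℕ) + 1))

namespace Clustering

/-- The coordinates of the matrix of cluster parameters. -/
abbrev Coord (i : Clustering p m) : Type := Fin p × Fin ((i.1 : ℕ) + 1)

/-- The minimax rate associated with the number of clusters of `i`. -/
noncomputable def complexity (i : Clustering p m) : ℝ := multitaskRate p m (i.1 + 1)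

/-- The prior weight of `i`: the number of clusters is penalised exponentially, and the assignment
is uniform given the number of clusters. -/
noncomputable def weight (D : ℝ) (i : Clustering p m) : ℝ :=
  exp (-D * i.complexity) * (((i.1 + 1 : ℕ) : ℝ) ^ m)⁻¹

/-- The design matrix of the model `i`. -/
noncomputable def design (X : Matrix (Fin n) (Fin p) ℝ) (i : Clustering p m) :
    Matrix (Fin n × Fin m) i.Coord ℝ :=
  mtX m (i.1 + 1) X i.2

lemma isComplexity : IsComplexity Coord (complexity : Clustering p m → ℝ) where
  card_le i := by
    simpa [complexity] using mul_le_multitaskRate p m (i.1 + 1)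
  sum_exp_le_one := by
    refine le_trans ?_ (sum_exp_neg_multitaskRate_le_one p m)
    rw [Fintype.sum_sigma]
    refine Finset.sum_le_sum fun k _ => ?_
    calc ∑ z : Fin m → Fin ((k : ℕ) + 1), exp (-2 * complexity ⟨k, z⟩)
        = ((k + 1 : ℕ) : ℝ) ^ m * exp (-2 * multitaskRate p m (k + 1)) := by simp [complexity]
      _ ≤ exp (multitaskRate p m (k + 1)) * exp (-2 * multitaskRate p m (k + 1)) := by
          gcongr; exact pow_le_exp_multitaskRate p m k.val.succ_pos
      _ = exp (-multitaskRate p m (k + 1)) := by rw [← exp_add]; ring_nf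

lemma isComplexityPrior (D : ℝ) :
    IsComplexityPrior Coord D (complexity : Clustering p m → ℝ) (weight D) where
  toIsComplexity := isComplexity
  le_exp i := mul_le_of_le_one_right (exp_pos _).le <| inv_le_one_of_one_le₀ <|
    one_le_pow₀ (by exact_mod_cast i.1.val.succ_pos)
  exp_le i := by
    have h_inv : exp (-i.complexity) ≤ (((i.1 + 1 : ℕ) : ℝ) ^ m)⁻¹ := by
      rw [exp_neg]
      exact inv_anti₀ (by positivity) (pow_le_exp_multitaskRate p m i.1.val.succ_pos)
    calc exp (-(D + 1) * i.complexity) = exp (-D * i.complexity) * exp (-i.complexity) := by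
          rw [← exp_add]; ring_nf
      _ ≤ weight D i := mul_le_mul_of_nonneg_left h_inv (exp_pos _).le

end Clustering

lemma mtPost_eq_gpostP (X : Matrix (Fin n) (Fin p) ℝ) (D lam : ℝ) (Y : Fin n × Fin m → ℝ)
    (K : Set ℕ) (U : Set (Fin n × Fin m → ℝ)) :
    mtPost n p m X D lam Y K U = gpostP (Clustering.weight D) (Clustering.design X)
      (fun i Q => Clustering.design X i *ᵥ Q) lam Y {i | (i.1 : ℕ) + 1 ∈ K} U := rfl

lemma mtX_mulVec_apply {k : ℕ} (X : Matrix (Fin n) (Fin p) ℝ) (z : Fin m → Fin k)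
    (Q : Fin p × Fin k → ℝ) (a : Fin n × Fin m) :
    (mtX m k X z *ᵥ Q) a = (X *ᵥ fun t => Q (t, z a.2)) a.1 := by
  simp [mulVec, dotProduct, mtX, Fintype.sum_prod_type, ite_mul]

lemma gramDet_mtX_pos {k : ℕ} {X : Matrix (Fin n) (Fin p) ℝ} (hX : (Xᵀ * X).det ≠ 0)
    {z : Fin m → Fin k} (hz : Function.Surjective z) : 0 < gramDet (mtX m k X z) := by
  have hX_inj : Function.Injective X.mulVec :=
    .of_comp (f := Xᵀ.mulVec) <| by
      simpa only [Function.comp_def, mulVec_mulVec] using mulVec_injective_of_det_ne_zero hX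
  refine gramDet_pos_of_injective fun Q Q' h => ?_
  ext ⟨t, c⟩
  obtain ⟨j, rfl⟩ := hz c
  have h_column : (X *ᵥ fun t => Q (t, z j)) = X *ᵥ fun t => Q' (t, z j) := by
    ext i
    simpa only [mtX_mulVec_apply] using congrFun h (i, j)
  exact congrFun (hX_inj h_column) t

lemma exists_surjective_fin_comp_eq {α β : Type*} [Nonempty α] [Fintype β] (f : α → β) :
    ∃ (k : ℕ) (g : α → Fin (k + 1)) (e : Fin (k + 1) → β),
      k + 1 ≤ Fintype.card β ∧ Function.Surjective g ∧ e ∘ g = f := by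
  obtain ⟨k, hk⟩ := Nat.exists_eq_add_one_of_ne_zero (Nat.card_pos (α := Set.range f)).ne'
  let e := Finite.equivFinOfCardEq hk
  refine ⟨k, e ∘ Set.rangeFactorization f, Subtype.val ∘ e.symm, ?_,
    e.surjective.comp Set.rangeFactorization_surjective, ?_⟩
  · rw [← hk, ← Nat.card_eq_fintype_card]
    exact Nat.card_le_card_of_injective _ Subtype.val_injective
  · ext a; simp

/-- Clusters to which `zs` assigns no task are dropped, since they would make the model
unidentifiable. -/
lemma isRepresentable_design [NeZero m] (hks : ks ≤ p) {X : Matrix (Fin n) (Fin p) ℝ}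
    (hX : (Xᵀ * X).det ≠ 0) (Qs : Fin p → Fin ks → ℝ) (zs : Fin m → Fin ks) :
    IsRepresentable (Clustering.design X) Clustering.complexity (multitaskRate p m ks)
      (fun a : Fin n × Fin m => ∑ t, X a.1 t * Qs t (zs a.2)) := by
  obtain ⟨k, z, e, hk, hz, rfl⟩ := exists_surjective_fin_comp_eq zs
  rw [Fintype.card_fin] at hk
  refine ⟨⟨⟨k, hk.trans hks⟩, z⟩, fun b => Qs b.1 (e b.2),
    multitaskRate_mono p m k.succ_pos hk, gramDet_mtX_pos hX hz, ?_⟩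
  ext a
  exact mtX_mulVec_apply X z _ a

lemma mtPost_zero_tasks (X : Matrix (Fin n) (Fin p) ℝ) (D lam : ℝ)
    (Y : Fin n × Fin 0 → ℝ) (K : Set ℕ) (U : Set (Fin n × Fin 0 → ℝ)) :
    mtPost n p 0 X D lam Y K U = 0 := by
  rw [mtPost_eq_gpostP]
  refine gpostP_eq_zero (fun i => ?_) _ _ lam Y _ U
  have : NeZero p := ⟨i.1.pos.ne'⟩
  exact gramDet_eq_zero_of_isEmpty _

end Clustering

theorem multitask_contraction_general {lam ρ δ D : ℝ} (hlam : 0 < lam) (hρ : 0 < ρ) (hδ : 0 < δ)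
    (hD : contractionConst lam ρ * (2 + δ) / δ ≤ D) {n p m ks : ℕ} (hks : 1 ≤ ks) (hksp : ks ≤ p)
    {X : Matrix (Fin n) (Fin p) ℝ} (hX : 0 < (Xᵀ * X).det) (Qs : Fin p → Fin ks → ℝ)
    (zs : Fin m → Fin ks) {Ω : Type*} [MeasurableSpace Ω] {P : Measure Ω} [IsProbabilityMeasure P]
    {W : Ω → Fin n × Fin m → ℝ} (hW : subG P ρ W) :
    (∫ ω, mtPost n p m X D lam (fun a => (∑ t, X a.1 t * Qs t (zs a.2)) + W ω a)
        {k | (1 + δ) * multitaskRate p m ks < multitaskRate p m k} Set.univ ∂P ≤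
      exp (-multitaskRate p m ks)) ∧
    ∫ ω, mtPost n p m X D lam (fun a => (∑ t, X a.1 t * Qs t (zs a.2)) + W ω a) Set.univ
        {v | 8 * (D + contractionConst lam ρ) * multitaskRate p m ks <
          ∑ a, (v a - ∑ t, X a.1 t * Qs t (zs a.2)) ^ 2} ∂P ≤
      exp (-multitaskRate p m ks) := by
  obtain rfl | hm := eq_zero_or_neZero m
  · simp only [mtPost_zero_tasks, integral_zero]
    exact ⟨(exp_pos _).le, (exp_pos _).le⟩
  have hcD : contractionConst lam ρ ≤ D := by
    refine le_trans ?_ hD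
    rw [le_div_iff₀ hδ]
    nlinarith [contractionConst_pos lam hρ]
  have hs : 1 ≤ multitaskRate p m ks :=
    le_trans (by exact_mod_cast hks) (natCast_le_multitaskRate (hks.trans hksp) m ks)
  have hu := isRepresentable_design hksp hX.ne' Qs zs
  have hw := Clustering.isComplexityPrior (p := p) (m := m) D
  have h_loss := hw.integral_gpostP_loss_le hlam hρ hcD hs hu hW Set.univ
  simp only [enr_sq] at h_loss
  simp only [mtPost_eq_gpostP]
  exact ⟨hw.integral_gpostP_complexity_le hlam hρ hδ hD hs hu hW _ _, h_loss⟩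

/-- Corollary 7 (multi-task learning): posterior contraction at the minimax rate
`pk* + m log k*`, both for the selected number of clusters and the prediction loss. -/
theorem multitask_contraction :
    ∀ lam ρ : ℝ, 0 < lam → 0 < ρ →
    ∃ δ₀ : ℝ, 0 < δ₀ ∧ δ₀ ≤ 1 ∧ ∀ δ : ℝ, 0 < δ → δ < δ₀ →
    ∃ D₀ : ℝ, 0 < D₀ ∧ ∀ D : ℝ, D₀ < D →
    ∃ M C' C'' : ℝ, 0 < M ∧ 0 < C' ∧ 0 < C'' ∧
    ∀ (n p m ks : ℕ), 1 ≤ ks → ks ≤ p →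
    ∀ (X : Matrix (Fin n) (Fin p) ℝ), 0 < (Xᵀ * X).det →
    ∀ (Qs : Fin p → Fin ks → ℝ) (zs : Fin m → Fin ks)
      (Bs : Fin p → Fin m → ℝ), (∀ t j, Bs t j = Qs t (zs j)) →
    ∀ (Ω : Type) (_ : MeasurableSpace Ω) (P : Measure Ω) (_ : IsProbabilityMeasure P)
      (W : Ω → Fin n × Fin m → ℝ), subG P ρ W →
    (∫ ω, mtPost n p m X D lam
          (fun a => (∑ t, X a.1 t * Bs t a.2) + W ω a)
          {k : ℕ | (1 + δ) * ((p : ℝ) * (ks : ℝ) + (m : ℝ) * Real.log ks)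
              < (p : ℝ) * (k : ℝ) + (m : ℝ) * Real.log k} Set.univ ∂P
        ≤ Real.exp (-C' * ((p : ℝ) * (ks : ℝ) + (m : ℝ) * Real.log ks))) ∧
    (∫ ω, mtPost n p m X D lam
          (fun a => (∑ t, X a.1 t * Bs t a.2) + W ω a) Set.univ
          {v : Fin n × Fin m → ℝ |
            M * ((p : ℝ) * (ks : ℝ) + (m : ℝ) * Real.log ks)
              < ∑ a : Fin n × Fin m, (v a - ∑ t, X a.1 t * Bs t a.2) ^ 2} ∂P
        ≤ Real.exp (-C'' * ((p : ℝ) * (ks : ℝ) + (m : ℝ) * Real.log ks))) := by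
  intro lam ρ hlam hρ
  have hc := contractionConst_pos lam hρ
  refine ⟨1, one_pos, le_rfl, fun δ hδ _ =>
    ⟨contractionConst lam ρ * (2 + δ) / δ, by positivity, fun D hD => ?_⟩⟩
  have hD_pos : 0 < D := lt_trans (by positivity) hD
  refine ⟨8 * (D + contractionConst lam ρ), 1, 1, by positivity, one_pos, one_pos, ?_⟩
  intro n p m ks hks hksp X hX Qs zs Bs hBs Ω _ P _ W hW
  simpa only [hBs, neg_one_mul, multitaskRate] using
    multitask_contraction_general hlam hρ hδ hD.le hks hksp hX Qs zs hW
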